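/- Let (s_{1,1}, …, s_{1,m}) = N(σ1, …, σm) be a Nikishin system such that Δ1 is contained in a half line and σ1 satisfies Carleman's condition. Then for every j = 1, …, m, the measure s_{1,j} = ⟨σ1, …, σj⟩ satisfies Carleman's condition, and the inverse measure τ_{1,j} of s_{1,j} (defined by 1/ŝ_{1,j}(z) = ℓ_{1,j}(z) + τ̂_{1,j}(z), ℓ_{1,j} a polynomial of degree 1) also satisfies Carleman's condition. -/

import Mathlib

/-!
The Carleman condition is insensitive to multiplying the moments by a geometric factor and to
shifting their index (`not_summable_of_le_shift`), so it suffices to bound moments. Throughout,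
the affine map `y = a x + b ≥ 0` that witnesses the condition for `σ₁` is kept; the moments
of `y` are bounded below geometrically because the support is infinite (`moment_lower`).

*Products.* The density of `s_{1,j}` with respect to `σ₁` is `|ŝ_{2,j}|`. The intervals `Δ₁` and
`Δ₂` are separated by a point `p` (`exists_separating`). At distance at least one from `p` the
density is bounded by a total mass, and within distance one of `p` the factor `y ^ n` is bounded
by `C ^ n` while the density is integrable. Hence the moments grow at most geometrically faster
(`nikProd_moment_le`).

*Inverse measures.* Along the real ray on which `y = -1/t`, `t → 0+`, the relation
`1/ŝ = ℓ + τ̂` becomes `f (A + B t + D t² g) = 1` with `D ≠ 0`, where `f` and `g` have the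
asymptotic expansions `∑ (-1)^n c_n t^n` and `∑ (-1)^n d_n t^n` given by the moments of `y` with
respect to `s_{1,j}` and `τ`. Comparing coefficients,
`A c_{n+2} - B c_{n+1} + D ∑_{i ≤ n} c_i d_{n-i} = 0`. The sum has nonnegative terms, so
`|D| c_0 d_n ≤ |A| c_{n+2} + |B| c_{n+1}` whatever the signs of `A`, `B`, `D` are
(`inverse_moment_bound`), and the index shift by two is harmless.
-/

open MeasureTheory Polynomial Set Filter Asymptotics

noncomputable section

/-- A finite Borel measure on `ℝ` of constant sign, encoded as a positive measure
together with a sign `±1`; the signed measure it represents is `sign • μ`. -/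
structure SignMeasure : Type where
  μ : Measure ℝ
  sign : ℝ
  sign_unit : sign = 1 ∨ sign = -1
  finite : IsFiniteMeasure μ

namespace SignMeasure

/-- The `n`-th moment `∫ x^n ds(x)` of the signed measure. -/
def moment (s : SignMeasure) (n : ℕ) : ℝ := s.sign * ∫ x, x ^ n ∂s.μ

/-- The Cauchy transform `ŝ(z) = ∫ ds(x)/(z - x)`. -/
def cauchy (s : SignMeasure) (z : ℂ) : ℂ :=
  (s.sign : ℂ) * ∫ x, (z - (x : ℂ))⁻¹ ∂s.μ

/-- The Cauchy transform restricted to the real axis. -/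
def realCauchy (s : SignMeasure) (x : ℝ) : ℝ := s.sign * ∫ t, (x - t)⁻¹ ∂s.μ

/-- The support of the underlying positive measure. -/
def support (s : SignMeasure) : Set ℝ :=
  {x : ℝ | ∀ ε > 0, 0 < s.μ (Set.Ioo (x - ε) (x + ε))}

/-- `Δ = Co(supp s)`, the smallest interval containing the support. -/
def interval (s : SignMeasure) : Set ℝ := convexHull ℝ s.support

/-- Membership in the class `M(Δ)`: infinitely many points in the support and
all moments finite. -/
def MemM (s : SignMeasure) : Prop :=
  s.support.Infinite ∧ ∀ n : ℕ, Integrable (fun x : ℝ => x ^ n) s.μ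

/-- The total variation `|s|`. -/
def totalVariation (s : SignMeasure) : ℝ := (s.μ Set.univ).toReal

/-- Carleman's condition `∑ |c_n|^{-1/(2n)} = ∞` for a measure supported in `[0,∞)`. -/
def Carleman (s : SignMeasure) : Prop :=
  ¬ Summable (fun n : ℕ => |s.moment (n + 1)| ^ (-(1 : ℝ) / (2 * (n + 1))))

/-- Carleman's condition for a measure supported in a half line: after an affine
change of variables `x ↦ a x + b` taking the support into `[0,∞)`, the moment
series diverges. -/
def CarlemanHalfLine (s : SignMeasure) : Prop :=
  ∃ a b : ℝ, a ≠ 0 ∧ (∀ x ∈ s.support, 0 ≤ a * x + b) ∧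
    ¬ Summable (fun n : ℕ =>
      |s.sign * ∫ x, (a * x + b) ^ (n + 1) ∂s.μ| ^ (-(1 : ℝ) / (2 * (n + 1))))

end SignMeasure

/-- The complement of `Δ = Co(supp s)` in `ℂ`. -/
def offInterval (s : SignMeasure) : Set ℂ := {z : ℂ | ∀ x ∈ s.interval, z ≠ (x : ℂ)}

/-- `t = ⟨sα, sβ⟩`, i.e. `dt(x) = ŝβ(x) dsα(x)` as signed measures; in particular
`ŝβ` is `sα`-integrable. -/
def IsNikProd (t sα sβ : SignMeasure) : Prop :=
  Integrable sβ.realCauchy sα.μ ∧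
  t.μ = sα.μ.withDensity (fun x => ENNReal.ofReal |sβ.realCauchy x|) ∧
  ∀ᵐ x ∂sα.μ, t.sign * |sβ.realCauchy x| = sα.sign * sβ.realCauchy x

/-- A Nikishin system `(s_{1,1},…,s_{1,m}) = N(σ_1,…,σ_m)`, together with all the
intermediate products `s_{j,k} = ⟨σ_j,…,σ_k⟩`, `1 ≤ j ≤ k ≤ m` (indices outside this
range carry junk values). -/
structure NikishinSystem (m : ℕ) : Type where
  σ : ℕ → SignMeasure
  s : ℕ → ℕ → SignMeasure
  mem : ∀ j, 1 ≤ j → j ≤ m → (σ j).MemM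
  consec : ∀ j, 1 ≤ j → j + 1 ≤ m →
    Set.Subsingleton ((σ j).interval ∩ (σ (j + 1)).interval)
  noAtom : ∀ j, 1 ≤ j → j + 1 ≤ m →
    ∀ x ∈ (σ j).interval ∩ (σ (j + 1)).interval, (σ j).μ {x} = 0 ∧ (σ (j + 1)).μ {x} = 0
  s_diag : ∀ j, s j j = σ j
  s_prod : ∀ j k, 1 ≤ j → j < k → k ≤ m → IsNikProd (s j k) (σ j) (s (j + 1) k)
  s_mem : ∀ j k, 1 ≤ j → j ≤ k → k ≤ m → (s j k).MemM

/-- `|n| = n_1 + ⋯ + n_m`. -/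
def multiNorm (m : ℕ) (n : ℕ → ℕ) : ℕ := ∑ j ∈ Finset.Icc 1 m, n j

/-- `max_{j=1,…,m} n_j`. -/
def multiMax (m : ℕ) (n : ℕ → ℕ) : ℕ := (Finset.Icc 1 m).sup n

/-- The extended components `(n_0, n_1, …, n_m)` with `n_0 = max_j n_j - 1`. -/
def multiComp (m : ℕ) (n : ℕ → ℕ) (j : ℕ) : ℕ :=
  if j = 0 then multiMax m n - 1 else n j

/-- `deg p ≤ d - 1`, with the convention that `d = 0` forces `p ≡ 0`. -/
def DegBound (p : Polynomial ℝ) (d : ℕ) : Prop :=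
  (d = 0 → p = 0) ∧ (p ≠ 0 → p.natDegree < d)

/-- The linear form `A_{n,j}(z) = a_j(z) + ∑_{k=j+1}^m a_k(z) ŝ_{j+1,k}(z)`
(for `j = m` this is just `a_m`). -/
def formA (m : ℕ) (N : NikishinSystem m) (a : ℕ → Polynomial ℝ) (j : ℕ) (z : ℂ) : ℂ :=
  Polynomial.aeval z (a j) +
    ∑ k ∈ Finset.Icc (j + 1) m, Polynomial.aeval z (a k) * (N.s (j + 1) k).cauchy z

/-- The restriction of the linear form `A_{n,j}` to the real axis. -/
def formAReal (m : ℕ) (N : NikishinSystem m) (a : ℕ → Polynomial ℝ) (j : ℕ) (x : ℝ) : ℝ :=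
  (a j).eval x + ∑ k ∈ Finset.Icc (j + 1) m, (a k).eval x * (N.s (j + 1) k).realCauchy x

/-- `(a_0, …, a_m)` is a type I multi-point Hermite–Padé approximant of
`(ŝ_{1,1},…,ŝ_{1,m})` with respect to `w`. -/
def IsTypeI (m : ℕ) (N : NikishinSystem m) (n : ℕ → ℕ) (w : Polynomial ℝ)
    (a : ℕ → Polynomial ℝ) : Prop :=
  (∃ j ≤ m, a j ≠ 0) ∧
  (∀ j, j ≤ m → DegBound (a j) (multiComp m n j)) ∧
  DifferentiableOn ℂ (fun z => formA m N a 0 z / Polynomial.aeval z w)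
    (offInterval (N.σ 1)) ∧
  (fun z : ℂ => formA m N a 0 z / Polynomial.aeval z w) =O[Bornology.cobounded ℂ]
    fun z => (z ^ multiNorm m n)⁻¹

/-- Admissibility of the polynomial `w_n`: real coefficients (built in), degree at most
`|n| + max_j n_j - 2`, and zeros in `ℂ ∖ Δ_1`. -/
def GoodW (m : ℕ) (N : NikishinSystem m) (n : ℕ → ℕ) (w : Polynomial ℝ) : Prop :=
  w ≠ 0 ∧ w.natDegree ≤ multiNorm m n + multiMax m n - 2 ∧
    ∀ x ∈ (N.σ 1).interval, w.eval x ≠ 0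


/-! ### Comparing Carleman series -/

/-- Divergence of the Carleman series is inherited by a sequence which is at most a geometric
multiple of the original one with its index shifted by `r`. The shift changes the exponent
`-1/(2(n+r))` into `-1/(2n)`; terms smaller than `exp (-n)` are summable anyway, and on the others
this change costs at most the factor `exp r`. -/
lemma not_summable_of_le_shift (c d : ℕ → ℝ) (r : ℕ) (K M : ℝ) (hK : 0 < K) (hM : 0 < M)
    (hc : ∀ n, 0 < c n) (hd : ∀ n, 0 < d n)
    (hle : ∀ n, d n ≤ K * M ^ n * c (n + r))
    (hcar : ¬ Summable (fun n : ℕ => c (n + 1) ^ (-(1 : ℝ) / (2 * (n + 1))))) :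
    ¬ Summable (fun n : ℕ => d (n + 1) ^ (-(1 : ℝ) / (2 * (n + 1)))) := by
  intro hsum
  apply hcar
  rw [← summable_nat_add_iff r]
  set K' := max K 1 with hK'
  have hK1 : 1 ≤ K' := le_max_right _ _
  have hgeo : Summable (fun n : ℕ => Real.exp (-((n : ℝ) + 1))) := by
    have h := (Real.summable_exp_neg_nat).mul_right (Real.exp (-1))
    refine h.congr fun n => ?_
    rw [← Real.exp_add]; congr 1; ring
  refine Summable.of_nonneg_of_le (fun n => Real.rpow_nonneg (hc _).le _) (fun n => ?_)
    (hgeo.add (hsum.mul_left (Real.exp r * (K' * M) ^ (1 / 2 : ℝ))))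
  have hn : (0 : ℝ) < n + 1 := by positivity
  have hnr : (0 : ℝ) < n + 1 + r := by positivity
  have hKM : 0 < K' * M := by positivity
  have hC := hc (n + 1 + r)
  set C := c (n + 1 + r) with hCdef
  have hCeq : c (n + r + 1) = C := by rw [hCdef]; congr 1; ring
  have hexp : (-(1 : ℝ) / (2 * (((n + r : ℕ) : ℝ) + 1))) = -(1 : ℝ) / (2 * (n + 1 + r)) := by
    push_cast; congr 2; ring
  simp only [hCeq]
  rw [hexp]
  set u := C ^ (-(1 : ℝ) / (2 * ((n : ℝ) + 1 + r))) with hu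
  have hupos : 0 < u := Real.rpow_pos_of_pos hC _
  have hdn := hd (n + 1)
  -- the comparison hypothesis, raised to the power `-1/(2(n+1))`
  have h1 : C ^ (-(1 : ℝ) / (2 * ((n : ℝ) + 1))) ≤
      (K' * M) ^ (1 / 2 : ℝ) * d (n + 1) ^ (-(1 : ℝ) / (2 * ((n : ℝ) + 1))) := by
    have h2 : d (n + 1) ≤ (K' * M) ^ (n + 1) * C := by
      refine (hle (n + 1)).trans ?_
      rw [mul_pow]
      have : K ≤ K' ^ (n + 1) := (le_max_left K 1).trans (le_self_pow₀ hK1 (by omega))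
      gcongr
    have h3 : ((K' * M) ^ (n + 1) * C) ^ (-(1 : ℝ) / (2 * ((n : ℝ) + 1))) ≤
        d (n + 1) ^ (-(1 : ℝ) / (2 * ((n : ℝ) + 1))) :=
      Real.rpow_le_rpow_of_nonpos hdn h2
        (div_nonpos_of_nonpos_of_nonneg (by norm_num) (by positivity))
    rw [Real.mul_rpow (by positivity) hC.le, ← Real.rpow_natCast, ← Real.rpow_mul hKM.le] at h3
    have h4 : ((n + 1 : ℕ) : ℝ) * (-(1 : ℝ) / (2 * ((n : ℝ) + 1))) = -(1 / 2) := by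
      push_cast; field_simp
    rw [h4] at h3
    calc C ^ (-(1 : ℝ) / (2 * ((n : ℝ) + 1)))
        = (K' * M) ^ (1 / 2 : ℝ) *
          ((K' * M) ^ (-(1 / 2) : ℝ) * C ^ (-(1 : ℝ) / (2 * ((n : ℝ) + 1)))) := by
          rw [← mul_assoc, ← Real.rpow_add hKM]; simp
      _ ≤ _ := by gcongr
  have h5 : C ^ (-(1 : ℝ) / (2 * ((n : ℝ) + 1))) = u * u ^ ((r : ℝ) / (n + 1)) := by
    rw [← Real.rpow_one_add' hupos.le (by positivity), hu, ← Real.rpow_mul hC.le]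
    congr 1; field_simp
  have hd0 : 0 ≤ d (n + 1) ^ (-(1 : ℝ) / (2 * ((n : ℝ) + 1))) := Real.rpow_nonneg hdn.le _
  rcases le_total u (Real.exp (-((n : ℝ) + 1))) with h | h
  · have : 0 ≤ Real.exp r * (K' * M) ^ (1 / 2 : ℝ) *
        d (n + 1) ^ (-(1 : ℝ) / (2 * ((n : ℝ) + 1))) := by positivity
    linarith
  · have h6 : Real.exp (-r) ≤ u ^ ((r : ℝ) / (n + 1)) := by
      have := Real.rpow_le_rpow (Real.exp_pos _).le h (by positivity : (0 : ℝ) ≤ (r : ℝ) / (n + 1))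
      rw [← Real.exp_mul] at this
      convert this using 2
      field_simp
    have h7 : u ≤ Real.exp r * C ^ (-(1 : ℝ) / (2 * ((n : ℝ) + 1))) := by
      rw [h5]
      calc u = Real.exp r * (u * Real.exp (-r)) := by
            rw [mul_left_comm, ← Real.exp_add]; simp
        _ ≤ _ := by gcongr
    calc u ≤ Real.exp r * C ^ (-(1 : ℝ) / (2 * ((n : ℝ) + 1))) := h7
      _ ≤ Real.exp r * ((K' * M) ^ (1 / 2 : ℝ) *
          d (n + 1) ^ (-(1 : ℝ) / (2 * ((n : ℝ) + 1)))) := by gcongr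
      _ = Real.exp r * (K' * M) ^ (1 / 2 : ℝ) *
          d (n + 1) ^ (-(1 : ℝ) / (2 * ((n : ℝ) + 1))) := by ring
      _ ≤ _ := le_add_of_nonneg_left (Real.exp_pos _).le

/-! ### Moments of a measure and of its inverse measure -/

/-- The `k`-th remainder `∫ y^k / (1 + t y) dμ` of the expansion of `∫ dμ / (1 + t y)` in powers
of `t`. For `k = 0` it is, up to the factor `-t`, the Cauchy transform of the image of `μ` under
`y` at the point `-1/t`. -/
def rem (μ : Measure ℝ) (y : ℝ → ℝ) (k : ℕ) (t : ℝ) : ℝ := ∫ x, y x ^ k / (1 + t * y x) ∂μ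

section Rem

variable {μ : Measure ℝ} {y : ℝ → ℝ}

lemma rem_integrable (hy : ∀ᵐ x ∂μ, 0 ≤ y x) (hi : ∀ n, Integrable (fun x => y x ^ n) μ)
    (k : ℕ) {t : ℝ} (ht : 0 < t) : Integrable (fun x => y x ^ k / (1 + t * y x)) μ := by
  have hm : AEStronglyMeasurable y μ := by simpa using (hi 1).aestronglyMeasurable
  refine (hi k).mono' ?_ ?_
  · exact (((hm.aemeasurable.pow_const k).div
      ((hm.aemeasurable.const_mul t).const_add 1))).aestronglyMeasurable
  · filter_upwards [hy] with x hx
    have : 0 ≤ y x ^ k := by positivity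
    rw [Real.norm_of_nonneg (by positivity)]
    exact div_le_self this (by nlinarith [mul_nonneg ht.le hx])

lemma rem_nonneg (hy : ∀ᵐ x ∂μ, 0 ≤ y x) (k : ℕ) {t : ℝ} (ht : 0 < t) : 0 ≤ rem μ y k t := by
  apply integral_nonneg_of_ae
  filter_upwards [hy] with x hx
  simp only [Pi.zero_apply]
  positivity

lemma rem_step (hy : ∀ᵐ x ∂μ, 0 ≤ y x) (hi : ∀ n, Integrable (fun x => y x ^ n) μ)
    (k : ℕ) {t : ℝ} (ht : 0 < t) :
    rem μ y k t = (∫ x, y x ^ k ∂μ) - t * rem μ y (k + 1) t := by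
  rw [rem, rem, ← integral_const_mul,
    ← integral_sub (hi k) ((rem_integrable hy hi (k + 1) ht).const_mul t)]
  apply integral_congr_ae
  filter_upwards [hy] with x hx
  have : 1 + t * y x ≠ 0 := by positivity
  field_simp
  ring

lemma rem_le (hy : ∀ᵐ x ∂μ, 0 ≤ y x) (hi : ∀ n, Integrable (fun x => y x ^ n) μ)
    (k : ℕ) {t : ℝ} (ht : 0 < t) : rem μ y k t ≤ ∫ x, y x ^ k ∂μ := by
  have := rem_step hy hi k ht
  have := rem_nonneg (μ := μ) hy (k + 1) ht
  nlinarith [mul_nonneg ht.le this]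

lemma rem_tendsto (hy : ∀ᵐ x ∂μ, 0 ≤ y x) (hi : ∀ n, Integrable (fun x => y x ^ n) μ)
    (k : ℕ) : Tendsto (rem μ y k) (nhdsWithin 0 (Ioi 0)) (nhds (∫ x, y x ^ k ∂μ)) := by
  have hlow : Tendsto (fun t : ℝ => (∫ x, y x ^ k ∂μ) - t * ∫ x, y x ^ (k + 1) ∂μ)
      (nhdsWithin 0 (Ioi 0)) (nhds (∫ x, y x ^ k ∂μ)) := by
    have : Continuous (fun t : ℝ => (∫ x, y x ^ k ∂μ) - t * ∫ x, y x ^ (k + 1) ∂μ) := by fun_prop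
    have h := this.tendsto 0
    simp only [zero_mul, sub_zero] at h
    exact h.mono_left nhdsWithin_le_nhds
  refine tendsto_of_tendsto_of_tendsto_of_le_of_le' hlow tendsto_const_nhds ?_ ?_
  · filter_upwards [self_mem_nhdsWithin] with t ht
    rw [rem_step hy hi k ht]
    have := rem_le hy hi (k + 1) ht
    have := mul_le_mul_of_nonneg_left this (le_of_lt ht)
    linarith
  · filter_upwards [self_mem_nhdsWithin] with t ht
    exact rem_le hy hi k ht

end Rem

/-- If `L - t φ(t)` vanishes for `t > 0` and tends to `L` as `t → 0+`, then `L = 0` and `φ`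
vanishes. This is one step in the comparison of coefficients of asymptotic expansions
at `t = 0`. -/
lemma divide_step {ψ φ : ℝ → ℝ} {L : ℝ} (h0 : ∀ t > 0, ψ t = 0)
    (hlim : Tendsto ψ (nhdsWithin 0 (Ioi 0)) (nhds L))
    (hstep : ∀ t > 0, ψ t = L - t * φ t) : L = 0 ∧ ∀ t > 0, φ t = 0 := by
  have hL : L = 0 := by
    have h : Tendsto ψ (nhdsWithin 0 (Ioi 0)) (nhds 0) := by
      refine tendsto_const_nhds.congr' ?_
      filter_upwards [self_mem_nhdsWithin] with t ht
      exact (h0 t ht).symm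
    exact tendsto_nhds_unique hlim h
  refine ⟨hL, fun t ht => ?_⟩
  have h := hstep t ht
  rw [h0 t ht, hL] at h
  have h2 : t * φ t = 0 := by linarith
  exact (mul_eq_zero.mp h2).resolve_left ht.ne'

/-- The moment bound for the inverse measure. If
`f (A + B t + D t² g) = 1`, where `f` and `g` are the transforms of `μ` and `ν` in the variable
`t`, then comparing coefficients gives
`A c_{n+2} - B c_{n+1} + D ∑_{i ≤ n} c_i d_{n-i} = 0`. All terms of the sum are nonnegative, so
`d_n` is controlled by `c_{n+1}` and `c_{n+2}`. -/
lemma inverse_moment_bound {μ ν : Measure ℝ} {y : ℝ → ℝ}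
    (hyμ : ∀ᵐ x ∂μ, 0 ≤ y x) (hμ : ∀ n, Integrable (fun x => y x ^ n) μ)
    (hyν : ∀ᵐ x ∂ν, 0 ≤ y x) (hν : ∀ n, Integrable (fun x => y x ^ n) ν)
    {A B D : ℝ}
    (heq : ∀ t > 0, rem μ y 0 t * (A + B * t + D * t ^ 2 * rem ν y 0 t) = 1) (n : ℕ) :
    |D| * ((∫ x, y x ^ 0 ∂μ) * ∫ x, y x ^ n ∂ν) ≤
      |A| * (∫ x, y x ^ (n + 2) ∂μ) + |B| * ∫ x, y x ^ (n + 1) ∂μ := by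
  set c : ℕ → ℝ := fun k => ∫ x, y x ^ k ∂μ with hc
  set d : ℕ → ℝ := fun k => ∫ x, y x ^ k ∂ν with hd
  have fs : ∀ k, ∀ t > 0, rem μ y k t = c k - t * rem μ y (k + 1) t :=
    fun k t ht => rem_step hyμ hμ k ht
  have gs : ∀ k, ∀ t > 0, rem ν y k t = d k - t * rem ν y (k + 1) t :=
    fun k t ht => rem_step hyν hν k ht
  have fl : ∀ k, Tendsto (rem μ y k) (nhdsWithin 0 (Ioi 0)) (nhds (c k)) :=
    fun k => rem_tendsto hyμ hμ k
  have gl : ∀ k, Tendsto (rem ν y k) (nhdsWithin 0 (Ioi 0)) (nhds (d k)) :=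
    fun k => rem_tendsto hyν hν k
  have tl : Tendsto (fun t : ℝ => t) (nhdsWithin 0 (Ioi 0)) (nhds 0) :=
    tendsto_id.mono_left nhdsWithin_le_nhds
  have hcn : ∀ k, 0 ≤ c k := fun k => integral_nonneg_of_ae (by
    filter_upwards [hyμ] with x hx using by simp only [Pi.zero_apply]; positivity)
  have hdn : ∀ k, 0 ≤ d k := fun k => integral_nonneg_of_ae (by
    filter_upwards [hyν] with x hx using by simp only [Pi.zero_apply]; positivity)
  -- `H k` is the `k`-th remainder of the product of the two expansions
  set H : ℕ → ℝ → ℝ := fun k t => rem μ y k t * rem ν y 0 t +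
    ∑ i ∈ Finset.range k, c i * rem ν y (k - i) t with hH
  set h : ℕ → ℝ := fun k => c k * d 0 + ∑ i ∈ Finset.range k, c i * d (k - i) with hh
  have Hl : ∀ k, Tendsto (H k) (nhdsWithin 0 (Ioi 0)) (nhds (h k)) := fun k =>
    ((fl k).mul (gl 0)).add (tendsto_finsetSum _ fun i _ => (gl (k - i)).const_mul (c i))
  have Hs : ∀ k, ∀ t > 0, H k t = h k - t * H (k + 1) t := by
    intro k t ht
    simp only [hH, hh, Finset.sum_range_succ]
    have e1 : ∑ i ∈ Finset.range k, c i * rem ν y (k - i) t =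
        ∑ i ∈ Finset.range k, c i * d (k - i) -
          t * ∑ i ∈ Finset.range k, c i * rem ν y (k + 1 - i) t := by
      rw [Finset.mul_sum, ← Finset.sum_sub_distrib]
      refine Finset.sum_congr rfl fun i hi => ?_
      have : k + 1 - i = k - i + 1 := by have := Finset.mem_range.mp hi; omega
      rw [this, gs (k - i) t ht]; ring
    have e2 : k + 1 - k = 1 := by omega
    rw [e1, e2, fs k t ht, gs 0 t ht]
    ring
  have s1 := divide_step (ψ := fun t => rem μ y 0 t * (A + B * t + D * t ^ 2 * rem ν y 0 t) - 1)
    (φ := fun t => A * rem μ y 1 t - B * rem μ y 0 t - t * D * H 0 t) (L := c 0 * A - 1)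
    (fun t ht => by simp only [heq t ht, sub_self])
    (by
      have := ((fl 0).mul ((tendsto_const_nhds (x := A)).add (tl.const_mul B) |>.add
        (((tl.pow 2).const_mul D).mul (gl 0)))).sub_const 1
      simpa using this)
    (fun t ht => by
      simp only [hH, Finset.range_zero, Finset.sum_empty]
      have := fs 0 t ht
      linear_combination A * this)
  have s2 := divide_step (ψ := fun t => A * rem μ y 1 t - B * rem μ y 0 t - t * D * H 0 t)
    (φ := fun t => A * rem μ y 2 t - B * rem μ y 1 t + D * H 0 t) (L := A * c 1 - B * c 0)
    s1.2
    (by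
      have := (((fl 1).const_mul A).sub ((fl 0).const_mul B)).sub ((tl.mul_const D).mul (Hl 0))
      simpa using this)
    (fun t ht => by
      have h1 := fs 1 t ht
      have h0 := fs 0 t ht
      linear_combination A * h1 - B * h0)
  have sk : ∀ k, A * c (k + 2) - B * c (k + 1) + D * h k = 0 ∧
      ∀ t > 0, A * rem μ y (k + 3) t - B * rem μ y (k + 2) t + D * H (k + 1) t = 0 := by
    have key : ∀ k, (∀ t > 0, A * rem μ y (k + 2) t - B * rem μ y (k + 1) t + D * H k t = 0) →
        A * c (k + 2) - B * c (k + 1) + D * h k = 0 ∧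
        ∀ t > 0, A * rem μ y (k + 3) t - B * rem μ y (k + 2) t + D * H (k + 1) t = 0 := by
      intro k hk
      exact divide_step hk
        ((((fl (k + 2)).const_mul A).sub ((fl (k + 1)).const_mul B)).add ((Hl k).const_mul D))
        (fun t ht => by
          have h2 := fs (k + 2) t ht
          have h1 := fs (k + 1) t ht
          have h0 := Hs k t ht
          linear_combination A * h2 - B * h1 + D * h0)
    intro k
    induction k with
    | zero => exact key 0 s2.2
    | succ k ih => exact key (k + 1) ih.2
  have hfin := (sk n).1
  have hge : c 0 * d n ≤ h n := by
    rcases n with _ | n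
    · simp [hh]
    · have h1 : c 0 * d (n + 1) ≤ ∑ i ∈ Finset.range (n + 1), c i * d (n + 1 - i) :=
        Finset.single_le_sum (f := fun i => c i * d (n + 1 - i))
          (fun i _ => mul_nonneg (hcn i) (hdn _)) (Finset.mem_range.mpr (Nat.succ_pos n))
      have h2 := mul_nonneg (hcn (n + 1)) (hdn 0)
      simp only [hh]; linarith
  have hhn : 0 ≤ h n := (mul_nonneg (hcn 0) (hdn _)).trans hge
  calc |D| * (c 0 * d n) ≤ |D| * h n := by gcongr
    _ = |D * h n| := by rw [abs_mul, abs_of_nonneg hhn]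
    _ = |B * c (n + 1) - A * c (n + 2)| := by
        congr 1; linear_combination hfin
    _ ≤ |B * c (n + 1)| + |A * c (n + 2)| := abs_sub _ _
    _ = |A| * c (n + 2) + |B| * c (n + 1) := by
        rw [abs_mul, abs_mul, abs_of_nonneg (hcn _), abs_of_nonneg (hcn _)]; ring

/-! ### Supports, moments and separation of intervals -/

/-- Almost every point lies in the support. -/
lemma ae_mem_support (s : SignMeasure) : ∀ᵐ x ∂s.μ, x ∈ s.support := by
  rw [ae_iff]
  refine measure_null_of_locally_null _ fun x hx => ?_
  simp only [SignMeasure.support, mem_ofPred_eq, not_forall] at hx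
  obtain ⟨ε, hε, h⟩ := hx
  exact ⟨Ioo (x - ε) (x + ε), mem_nhdsWithin_of_mem_nhds
    (Ioo_mem_nhds (by linarith) (by linarith)), by simpa using h⟩

lemma ae_mem_interval (s : SignMeasure) : ∀ᵐ x ∂s.μ, x ∈ s.interval := by
  filter_upwards [ae_mem_support s] with x hx using subset_convexHull ℝ _ hx

lemma support_mono {s t : SignMeasure} (h : t.μ ≪ s.μ) : t.support ⊆ s.support := by
  intro x hx ε hε
  by_contra h0
  exact (hx ε hε).ne' (h (by simpa using h0))

lemma interval_nonneg {s : SignMeasure} {a b : ℝ} (h : ∀ x ∈ s.support, 0 ≤ a * x + b) :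
    ∀ x ∈ s.interval, 0 ≤ a * x + b := by
  have hconv : Convex ℝ {x : ℝ | 0 ≤ a * x + b} := by
    intro x hx z hz p q hp hq hpq
    simp only [mem_ofPred_eq, smul_eq_mul] at *
    have : a * (p * x + q * z) + b = p * (a * x + b) + q * (a * z + b) := by
      linear_combination (-b) * hpq
    rw [this]; positivity
  exact fun x hx => convexHull_min (fun x hx => h x hx) hconv hx

lemma affine_pow_integrable {s : SignMeasure} (hs : s.MemM) (a b : ℝ) (n : ℕ) :
    Integrable (fun x : ℝ => (a * x + b) ^ n) s.μ := by
  simp only [add_pow, mul_pow]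
  refine integrable_finsetSum _ fun i _ => ?_
  exact (((hs.2 i).const_mul (a ^ i)).mul_const _).mul_const _

/-- Moments of a measure on a half line, not concentrated at the endpoint, decay at most
geometrically. -/
lemma moment_lower {s : SignMeasure} (hs : s.MemM) {a b : ℝ} (ha : a ≠ 0)
    (hab : ∀ x ∈ s.support, 0 ≤ a * x + b) :
    ∃ κ > 0, ∃ δ > 0, ∀ n : ℕ, κ * δ ^ n ≤ ∫ x, (a * x + b) ^ n ∂s.μ := by
  have := s.finite
  -- only one point of the infinite support can be a zero of `a x + b`
  obtain ⟨x₀, hx₀, hne⟩ : ∃ x ∈ s.support, x ≠ -b / a := hs.1.exists_notMem_finite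
    (finite_singleton (-b / a)) |>.imp fun x h => by simpa using h
  have hpos : 0 < a * x₀ + b := by
    refine lt_of_le_of_ne (hab x₀ hx₀) fun h => hne ?_
    field_simp; linarith
  set δ := (a * x₀ + b) / 2 with hδ
  have hδpos : 0 < δ := by positivity
  have hapos : 0 < |a| := abs_pos.mpr ha
  set U := Ioo (x₀ - δ / |a|) (x₀ + δ / |a|) with hU
  have hUpos := hx₀ (δ / |a|) (by positivity)
  refine ⟨s.μ.real U, ENNReal.toReal_pos hUpos.ne' (measure_ne_top _ _), δ, hδpos, fun n => ?_⟩
  have hUge : ∀ x ∈ U, δ ≤ a * x + b := by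
    intro x hx
    have h1 : |x - x₀| < δ / |a| := by rw [abs_lt]; constructor <;> linarith [hx.1, hx.2]
    have h2 : |a * (x - x₀)| < δ := by
      rw [abs_mul]; calc |a| * |x - x₀| < |a| * (δ / |a|) := by gcongr
        _ = δ := by field_simp
    have := (abs_lt.mp h2).1
    linarith
  calc s.μ.real U * δ ^ n = ∫ _ in U, δ ^ n ∂s.μ := by simp
    _ ≤ ∫ x in U, (a * x + b) ^ n ∂s.μ := by
        refine setIntegral_mono_on (by simp) (affine_pow_integrable hs a b n).integrableOn
          measurableSet_Ioo fun x hx => ?_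
        have := hUge x hx
        gcongr
    _ ≤ _ := by
        refine setIntegral_le_integral (affine_pow_integrable hs a b n) ?_
        filter_upwards [ae_mem_support s] with x hx
        have := hab x hx
        simp only [Pi.zero_apply]; positivity

/-- Two nondegenerate intervals with at most one common point are separated by a point. -/
lemma exists_separating {S T : Set ℝ} (hS : S.OrdConnected) (hT : T.OrdConnected)
    (hSn : S.Nontrivial) (hTn : T.Nontrivial) (h : (S ∩ T).Subsingleton) :
    ∃ p : ℝ, ((∀ x ∈ S, x ≤ p) ∧ ∀ t ∈ T, p ≤ t) ∨ ((∀ x ∈ S, p ≤ x) ∧ ∀ t ∈ T, t ≤ p) := by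
  have key : (∀ x ∈ S, ∀ t ∈ T, x ≤ t) ∨ (∀ x ∈ S, ∀ t ∈ T, t ≤ x) := by
    by_contra hcon
    push Not at hcon
    obtain ⟨⟨x, hx, t, ht, htx⟩, x', hx', t', ht', hxt'⟩ := hcon
    obtain ⟨p, hpS, hpT⟩ : ∃ p, p ∈ S ∧ p ∈ T := by
      rcases le_total x' t with h1 | h1
      · exact ⟨t, hS.out hx' hx ⟨h1, htx.le⟩, ht⟩
      · exact ⟨x', hx', hT.out ht ht' ⟨h1, hxt'.le⟩⟩
    -- on neither side of `p` can both sets have points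
    have right : ∀ u ∈ S, ∀ v ∈ T, p < u → p < v → False := fun u hu v hv h1 h2 =>
      (lt_min h1 h2).ne (h ⟨hpS, hpT⟩ ⟨hS.out hpS hu ⟨(lt_min h1 h2).le, min_le_left _ _⟩,
        hT.out hpT hv ⟨(lt_min h1 h2).le, min_le_right _ _⟩⟩)
    have left : ∀ u ∈ S, ∀ v ∈ T, u < p → v < p → False := fun u hu v hv h1 h2 =>
      (max_lt h1 h2).ne (h ⟨hS.out hu hpS ⟨le_max_left _ _, (max_lt h1 h2).le⟩,
        hT.out hv hpT ⟨le_max_right _ _, (max_lt h1 h2).le⟩⟩ ⟨hpS, hpT⟩)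
    obtain ⟨u, hu, hup⟩ := hSn.exists_ne p
    obtain ⟨v, hv, hvp⟩ := hTn.exists_ne p
    rcases lt_or_gt_of_ne hup with hup | hup <;> rcases lt_or_gt_of_ne hvp with hvp | hvp
    · exact left u hu v hv hup hvp
    · have h1 : x ≤ p := not_lt.mp fun h => right x hx v hv h hvp
      have h2 : p ≤ t := not_lt.mp fun h => left u hu t ht hup h
      linarith
    · have h1 : p ≤ x' := not_lt.mp fun h => left x' hx' v hv h hvp
      have h2 : t' ≤ p := not_lt.mp fun h => right u hu t' ht' hup h
      linarith
    · exact right u hu v hv hup hvp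
  rcases key with key | key
  · refine ⟨sSup S, Or.inl ⟨fun x hx => ?_, fun t ht => ?_⟩⟩
    · obtain ⟨t, ht⟩ := hTn.nonempty
      exact le_csSup ⟨t, fun x hx => key x hx t ht⟩ hx
    · exact csSup_le hSn.nonempty fun x hx => key x hx t ht
  · refine ⟨sInf S, Or.inr ⟨fun x hx => ?_, fun t ht => ?_⟩⟩
    · obtain ⟨t, ht⟩ := hTn.nonempty
      exact csInf_le ⟨t, fun x hx => key x hx t ht⟩ hx
    · exact le_csInf hSn.nonempty fun x hx => key x hx t ht

lemma interval_nontrivial {s : SignMeasure} (hs : s.MemM) : s.interval.Nontrivial :=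
  hs.1.nontrivial.mono (subset_convexHull ℝ _)

lemma interval_ordConnected (s : SignMeasure) : s.interval.OrdConnected :=
  (convex_convexHull ℝ s.support).ordConnected

/-! ### The Carleman condition for products and inverse measures -/

lemma abs_signed_moment (s : SignMeasure) {a b : ℝ} (hab : ∀ x ∈ s.support, 0 ≤ a * x + b)
    (n : ℕ) : |s.sign * ∫ x, (a * x + b) ^ n ∂s.μ| = ∫ x, (a * x + b) ^ n ∂s.μ := by
  have h1 : |s.sign| = 1 := by rcases s.sign_unit with h | h <;> simp [h]
  rw [abs_mul, h1, one_mul, abs_of_nonneg]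
  refine integral_nonneg_of_ae ?_
  filter_upwards [ae_mem_support s] with x hx
  have := hab x hx
  simp only [Pi.zero_apply]; positivity

/-- The Cauchy transform is bounded by the total mass at distance at least one from the
measure. -/
lemma abs_realCauchy_le (s : SignMeasure) (x : ℝ) (h : ∀ᵐ t ∂s.μ, 1 ≤ |x - t|) :
    |s.realCauchy x| ≤ s.μ.real univ := by
  have := s.finite
  have h1 : |s.sign| = 1 := by rcases s.sign_unit with h | h <;> simp [h]
  rw [SignMeasure.realCauchy, abs_mul, h1, one_mul]
  have := norm_integral_le_of_norm_le_const (μ := s.μ) (f := fun t => (x - t)⁻¹) (C := 1) (by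
    filter_upwards [h] with t ht
    rw [norm_inv, Real.norm_eq_abs]
    exact inv_le_one_of_one_le₀ ht)
  simpa using this

/-- Multiplying a measure by the Cauchy transform of a measure on a separated interval enlarges
its moments at most geometrically: the transform is bounded away from the possible common
endpoint, and near that endpoint the factor `(a x + b) ^ n` is at most `C ^ n`. -/
lemma nikProd_moment_le {t sα sβ : SignMeasure} (hprod : IsNikProd t sα sβ)
    (hα : sα.MemM) {p : ℝ}
    (hsep : ∀ᵐ x ∂sα.μ, ∀ᵐ u ∂sβ.μ, |x - p| ≤ |x - u|)
    {a b : ℝ} (ha : a ≠ 0) (hab : ∀ x ∈ sα.support, 0 ≤ a * x + b) :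
    ∃ K > 0, ∃ M > 0, ∀ n : ℕ,
      ∫ x, (a * x + b) ^ n ∂t.μ ≤ K * M ^ n * ∫ x, (a * x + b) ^ n ∂sα.μ := by
  have := sα.finite
  obtain ⟨κ, hκ, δ, hδ, hlow⟩ := moment_lower hα ha hab
  obtain ⟨hint, hμ, -⟩ := hprod
  set C := |a * p + b| + |a| with hC
  have hCpos : 0 < C := by have := abs_pos.mpr ha; positivity
  set I := ∫ x, |sβ.realCauchy x| ∂sα.μ with hI
  have hI0 : 0 ≤ I := integral_nonneg fun x => abs_nonneg _
  set m := sβ.μ.real univ with hm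
  have hm0 : 0 ≤ m := measureReal_nonneg
  have hM1 : 1 ≤ max (C / δ) 1 := le_max_right _ _
  refine ⟨I / κ + m + 1, by positivity, max (C / δ) 1, by positivity, fun n => ?_⟩
  set c := ∫ x, (a * x + b) ^ n ∂sα.μ with hc
  have hc0 : 0 ≤ c := le_trans (by positivity) (hlow n)
  have e1 : ∫ x, (a * x + b) ^ n ∂t.μ = ∫ x, |sβ.realCauchy x| * (a * x + b) ^ n ∂sα.μ := by
    rw [hμ, integral_withDensity_eq_integral_toReal_smul₀]
    · simp
    · exact hint.abs.aestronglyMeasurable.aemeasurable.ennreal_ofReal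
    · simp
  have e2 : ∫ x, |sβ.realCauchy x| * (a * x + b) ^ n ∂sα.μ ≤ C ^ n * I + m * c := by
    rw [hI, hc, ← integral_const_mul, ← integral_const_mul,
      ← integral_add (hint.abs.const_mul _) ((affine_pow_integrable hα a b n).const_mul _)]
    refine integral_mono_of_nonneg ?_
      ((hint.abs.const_mul _).add ((affine_pow_integrable hα a b n).const_mul _)) ?_
    · filter_upwards [ae_mem_support sα] with x hx
      have := hab x hx
      simp only [Pi.zero_apply]; positivity
    · filter_upwards [ae_mem_support sα, hsep] with x hx hxs
      have h0 := hab x hx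
      have hp0 : 0 ≤ (a * x + b) ^ n := by positivity
      rcases le_total |x - p| 1 with h | h
      · have h1 : a * x + b ≤ C := by
          have e : a * x + b = (a * p + b) + a * (x - p) := by ring
          have h3 : a * (x - p) ≤ |a| := (le_abs_self _).trans (by
            rw [abs_mul]; exact mul_le_of_le_one_right (abs_nonneg _) h)
          have := le_abs_self (a * p + b)
          linarith
        have h2 : (a * x + b) ^ n ≤ C ^ n := by gcongr
        have h3 := mul_le_mul_of_nonneg_left h2 (abs_nonneg (sβ.realCauchy x))
        have h4 := mul_nonneg hm0 hp0
        linarith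
      · have h1 := abs_realCauchy_le sβ x (by filter_upwards [hxs] with u hu using h.trans hu)
        have h2 := mul_le_mul_of_nonneg_right h1 hp0
        have h3 : 0 ≤ C ^ n * |sβ.realCauchy x| := by positivity
        linarith
  have e3 : C ^ n * I ≤ I / κ * (max (C / δ) 1) ^ n * c := by
    have h1 : C ^ n = (C / δ) ^ n / κ * (κ * δ ^ n) := by
      rw [div_pow]; field_simp
    have h2 : (C / δ) ^ n ≤ (max (C / δ) 1) ^ n := by gcongr; exact le_max_left _ _
    calc C ^ n * I = (C / δ) ^ n / κ * (κ * δ ^ n) * I := by rw [← h1]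
      _ ≤ (max (C / δ) 1) ^ n / κ * c * I := by gcongr; exact hlow n
      _ = _ := by ring
  have e4 : m * c ≤ (m + 1) * (max (C / δ) 1) ^ n * c := by
    have h1 : 1 ≤ (max (C / δ) 1) ^ n := one_le_pow₀ hM1
    gcongr
    nlinarith
  rw [e1]
  calc _ ≤ C ^ n * I + m * c := e2
    _ ≤ I / κ * (max (C / δ) 1) ^ n * c + (m + 1) * (max (C / δ) 1) ^ n * c := add_le_add e3 e4
    _ = _ := by ring

lemma moment_pos {s : SignMeasure} (hs : s.MemM) {a b : ℝ} (ha : a ≠ 0)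
    (hab : ∀ x ∈ s.support, 0 ≤ a * x + b) (n : ℕ) : 0 < ∫ x, (a * x + b) ^ n ∂s.μ := by
  obtain ⟨κ, hκ, δ, hδ, h⟩ := moment_lower hs ha hab
  exact lt_of_lt_of_le (by positivity) (h n)

/-- The Carleman condition with prescribed affine map passes to measures whose moments are
geometrically dominated, up to an index shift. -/
lemma carleman_of_moment_le {s t : SignMeasure} (hs : s.MemM) (ht : t.MemM) {a b : ℝ}
    (ha : a ≠ 0) (hs0 : ∀ x ∈ s.support, 0 ≤ a * x + b) (ht0 : ∀ x ∈ t.support, 0 ≤ a * x + b)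
    (r : ℕ) {K M : ℝ} (hK : 0 < K) (hM : 0 < M)
    (hle : ∀ n, ∫ x, (a * x + b) ^ n ∂t.μ ≤ K * M ^ n * ∫ x, (a * x + b) ^ (n + r) ∂s.μ)
    (hcar : ¬ Summable (fun n : ℕ =>
      |s.sign * ∫ x, (a * x + b) ^ (n + 1) ∂s.μ| ^ (-(1 : ℝ) / (2 * (n + 1))))) :
    ¬ Summable (fun n : ℕ =>
      |t.sign * ∫ x, (a * x + b) ^ (n + 1) ∂t.μ| ^ (-(1 : ℝ) / (2 * (n + 1)))) := by
  simp only [abs_signed_moment s hs0, abs_signed_moment t ht0] at hcar ⊢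
  exact not_summable_of_le_shift (fun n => ∫ x, (a * x + b) ^ n ∂s.μ)
    (fun n => ∫ x, (a * x + b) ^ n ∂t.μ) r K M hK hM (moment_pos hs ha hs0)
    (moment_pos ht ha ht0) hle hcar

/-- At the real point `z = (-1/t - b)/a`, outside the half line `a x + b ≥ 0`, the Cauchy
transform is, up to a factor, the transform `rem` in the variable `t`. -/
lemma cauchy_eq_rem (s : SignMeasure) {a b : ℝ} (ha : a ≠ 0)
    (hab : ∀ x ∈ s.support, 0 ≤ a * x + b) {t : ℝ} (ht : 0 < t) :
    s.cauchy (((-t⁻¹ - b) / a : ℝ) : ℂ) =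
      ((-(s.sign * a * t) * rem s.μ (fun x => a * x + b) 0 t : ℝ) : ℂ) := by
  have h : ∫ x, ((((-t⁻¹ - b) / a : ℝ) : ℂ) - (x : ℂ))⁻¹ ∂s.μ =
      ((-(a * t) * rem s.μ (fun x => a * x + b) 0 t : ℝ) : ℂ) := by
    rw [rem, ← integral_const_mul, ← integral_complex_ofReal]
    refine integral_congr_ae ?_
    filter_upwards [ae_mem_support s] with x hx
    rw [← Complex.ofReal_sub, ← Complex.ofReal_inv]
    congr 1
    have h0 := hab x hx
    have h1 : 1 + t * (a * x + b) ≠ 0 := by positivity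
    have h2 : (-t⁻¹ - b) / a - x = -(1 + t * (a * x + b)) / (a * t) := by field_simp; ring
    rw [h2, inv_div, pow_zero, div_neg]
    ring
  rw [SignMeasure.cauchy, h]
  push_cast; ring

/-- The moments of the inverse measure are dominated by those of the measure itself, with index
shifted by two. -/
lemma inverse_moment_le {s τ : SignMeasure} (hs : s.MemM) (hτ : τ.MemM) {a b : ℝ} (ha : a ≠ 0)
    (hs0 : ∀ x ∈ s.support, 0 ≤ a * x + b) (hτ0 : ∀ x ∈ τ.support, 0 ≤ a * x + b)
    {aℓ bℓ : ℝ}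
    (heq : ∀ t : ℝ, 0 < t → (s.cauchy (((-t⁻¹ - b) / a : ℝ) : ℂ))⁻¹ =
      (aℓ : ℂ) * (((-t⁻¹ - b) / a : ℝ) : ℂ) + (bℓ : ℂ) + τ.cauchy (((-t⁻¹ - b) / a : ℝ) : ℂ)) :
    ∃ K > 0, ∃ M > 0, ∀ n : ℕ, ∫ x, (a * x + b) ^ n ∂τ.μ ≤
      K * M ^ n * ∫ x, (a * x + b) ^ (n + 2) ∂s.μ := by
  have := s.finite
  obtain ⟨κ, hκ, δ, hδ, hlow⟩ := moment_lower hs ha hs0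
  set y : ℝ → ℝ := fun x => a * x + b with hy
  have hys : ∀ᵐ x ∂s.μ, 0 ≤ y x := by
    filter_upwards [ae_mem_support s] with x hx using hs0 x hx
  have hyτ : ∀ᵐ x ∂τ.μ, 0 ≤ y x := by
    filter_upwards [ae_mem_support τ] with x hx using hτ0 x hx
  have his : ∀ n, Integrable (fun x => y x ^ n) s.μ := affine_pow_integrable hs a b
  have hiτ : ∀ n, Integrable (fun x => y x ^ n) τ.μ := affine_pow_integrable hτ a b
  have hc0 : 0 < ∫ x, y x ^ 0 ∂s.μ := moment_pos hs ha hs0 0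
  -- the Cauchy transform has no zeros, so the reciprocal in the hypothesis is genuine
  have hF : ∀ t > 0, rem s.μ y 0 t ≠ 0 := by
    intro t ht h0
    rw [rem, integral_eq_zero_iff_of_nonneg_ae _ (rem_integrable hys his 0 ht)] at h0
    · have : ∫ x, y x ^ 0 ∂s.μ = ∫ _, (0 : ℝ) ∂s.μ := by
        refine integral_congr_ae ?_
        filter_upwards [h0, hys] with x hx hx0
        exfalso
        have : 0 < y x ^ 0 / (1 + t * y x) := by rw [pow_zero]; positivity
        exact this.ne' hx
      rw [this] at hc0
      simp at hc0
    · filter_upwards [hys] with x hx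
      simp only [Pi.zero_apply]; positivity
  have hs1 : s.sign ≠ 0 := by rcases s.sign_unit with h | h <;> simp [h]
  have hτ1 : τ.sign ≠ 0 := by rcases τ.sign_unit with h | h <;> simp [h]
  set A := s.sign * aℓ with hA
  set B := s.sign * (aℓ * b - a * bℓ) with hB
  set D := s.sign * τ.sign * a ^ 2 with hD
  have hDpos : 0 < |D| := abs_pos.mpr (by positivity)
  have hprod : ∀ t > 0, rem s.μ y 0 t * (A + B * t + D * t ^ 2 * rem τ.μ y 0 t) = 1 := by
    intro t ht
    have h := heq t ht
    rw [cauchy_eq_rem s ha hs0 ht, cauchy_eq_rem τ ha hτ0 ht] at h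
    norm_cast at h
    have hne : -(s.sign * a * t) * rem s.μ y 0 t ≠ 0 :=
      mul_ne_zero (neg_ne_zero.mpr (by positivity)) (hF t ht)
    rw [inv_eq_iff_eq_inv, eq_comm, inv_eq_iff_eq_inv, eq_comm, ← mul_eq_one_iff_inv_eq₀ hne] at h
    rw [← h, hA, hB, hD]
    field_simp
    ring
  have hbound := inverse_moment_bound hys his hyτ hiτ hprod
  set c0 := ∫ x, y x ^ 0 ∂s.μ with hc0def
  set M := max δ⁻¹ 1 with hM
  have hM1 : 1 ≤ M := le_max_right _ _
  set L := 1 + c0 / (κ * δ ^ 2) with hL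
  have hL0 : 0 < L := by positivity
  refine ⟨(|A| + |B| * L + 1) / (|D| * c0), by positivity, M, by positivity, fun n => ?_⟩
  have hb := hbound n
  have hc2 : 0 < ∫ x, y x ^ (n + 2) ∂s.μ := moment_pos hs ha hs0 (n + 2)
  have hl : κ * δ ^ (n + 2) ≤ ∫ x, y x ^ (n + 2) ∂s.μ := hlow (n + 2)
  have hc1 : ∫ x, y x ^ (n + 1) ∂s.μ ≤ c0 + ∫ x, y x ^ (n + 2) ∂s.μ := by
    rw [hc0def, ← integral_add (his 0) (his (n + 2))]
    refine integral_mono_ae (his _) ((his 0).add (his _)) ?_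
    filter_upwards [hys] with x hx
    rcases le_total (y x) 1 with h | h
    · have h1 : y x ^ (n + 1) ≤ 1 := pow_le_one₀ hx h
      have h2 : 0 ≤ y x ^ (n + 2) := by positivity
      simp only [pow_zero]; linarith
    · have h1 : y x ^ (n + 1) ≤ y x ^ (n + 2) := pow_le_pow_right₀ h (by omega)
      simp only [pow_zero]; linarith
  set c2 := ∫ x, y x ^ (n + 2) ∂s.μ with hc2def
  have hMn : 1 ≤ M ^ n := one_le_pow₀ hM1
  have hcc : c0 ≤ c0 / (κ * δ ^ 2) * M ^ n * c2 := by
    have h1 : δ⁻¹ ^ n ≤ M ^ n := by gcongr; exact le_max_left _ _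
    calc c0 = c0 / (κ * δ ^ 2) * δ⁻¹ ^ n * (κ * δ ^ (n + 2)) := by
          rw [inv_pow]; field_simp; ring
      _ ≤ _ := by gcongr
  have hMc : c2 ≤ M ^ n * c2 := le_mul_of_one_le_left hc2.le hMn
  have hc1' : ∫ x, y x ^ (n + 1) ∂s.μ ≤ L * (M ^ n * c2) := by
    rw [hL]; linarith
  have hA' : |A| * c2 ≤ |A| * (M ^ n * c2) := by gcongr
  have hB' : |B| * ∫ x, y x ^ (n + 1) ∂s.μ ≤ |B| * (L * (M ^ n * c2)) := by gcongr
  have hMc0 : 0 ≤ M ^ n * c2 := by positivity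
  rw [div_mul_eq_mul_div, div_mul_eq_mul_div, le_div_iff₀ (by positivity)]
  change (∫ x, y x ^ n ∂τ.μ) * (|D| * c0) ≤ _
  linarith

/-- Corollary 2.1. If `Δ₁` is contained in a half line and `σ₁`
satisfies Carleman's condition, then every `s_{1,j} = ⟨σ₁, …, σ_j⟩` satisfies
Carleman's condition, and so does every inverse measure `τ_{1,j}` defined by
`1/ŝ_{1,j}(z) = ℓ_{1,j}(z) + τ̂_{1,j}(z)` with `ℓ_{1,j}` of degree one. -/
theorem carleman_for_whole_system (m : ℕ) (hm : 1 ≤ m) (N : NikishinSystem m)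
    (hhalf : (∃ c : ℝ, ∀ x ∈ (N.σ 1).interval, c ≤ x) ∨
      (∃ c : ℝ, ∀ x ∈ (N.σ 1).interval, x ≤ c))
    (hcar : (N.σ 1).CarlemanHalfLine) :
    ∀ j, 1 ≤ j → j ≤ m →
      (N.s 1 j).CarlemanHalfLine ∧
      ∀ (τ : SignMeasure) (aℓ bℓ : ℝ), τ.MemM → τ.support ⊆ (N.σ 1).interval →
        aℓ ≠ 0 →
        (∀ z ∈ offInterval (N.σ 1),
          ((N.s 1 j).cauchy z)⁻¹ = (aℓ : ℂ) * z + (bℓ : ℂ) + τ.cauchy z) →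
        τ.CarlemanHalfLine := by
  obtain ⟨a, b, ha, hab, hdiv⟩ := hcar
  have hint := interval_nonneg hab
  intro j hj hjm
  have hmem := N.s_mem 1 j le_rfl hj hjm
  have hσ := N.mem 1 le_rfl hm
  obtain ⟨hs0, hsdiv⟩ : (∀ x ∈ (N.s 1 j).support, 0 ≤ a * x + b) ∧
      ¬ Summable (fun n : ℕ => |(N.s 1 j).sign * ∫ x, (a * x + b) ^ (n + 1) ∂(N.s 1 j).μ| ^
        (-(1 : ℝ) / (2 * (n + 1)))) := by
    rcases hj.eq_or_lt with rfl | hj1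
    · rw [N.s_diag]; exact ⟨hab, hdiv⟩
    have hprod := N.s_prod 1 j le_rfl hj1 hjm
    have hs0 : ∀ x ∈ (N.s 1 j).support, 0 ≤ a * x + b := by
      have hac : (N.s 1 j).μ ≪ (N.σ 1).μ := by
        rw [hprod.2.1]; exact withDensity_absolutelyContinuous _ _
      exact fun x hx => hab x (support_mono hac hx)
    refine ⟨hs0, ?_⟩
    have h2 : ∀ᵐ u ∂(N.s 2 j).μ, u ∈ (N.σ 2).interval := by
      have hac : (N.s 2 j).μ ≪ (N.σ 2).μ := by
        rcases (show 2 ≤ j from hj1).eq_or_lt with rfl | hj2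
        · rw [N.s_diag]
        · rw [(N.s_prod 2 j (by norm_num) hj2 hjm).2.1]
          exact withDensity_absolutelyContinuous _ _
      exact hac.ae_le (ae_mem_interval (N.σ 2))
    obtain ⟨p, hp⟩ := exists_separating (interval_ordConnected _) (interval_ordConnected _)
      (interval_nontrivial hσ) (interval_nontrivial (N.mem 2 (by norm_num) (by omega)))
      (N.consec 1 le_rfl (by omega))
    have hsep : ∀ᵐ x ∂(N.σ 1).μ, ∀ᵐ u ∂(N.s 2 j).μ, |x - p| ≤ |x - u| := by
      filter_upwards [ae_mem_interval (N.σ 1)] with x hx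
      filter_upwards [h2] with u hu
      rcases hp with ⟨h3, h4⟩ | ⟨h3, h4⟩
      · have h5 := h3 x hx
        have h6 := h4 u hu
        rw [abs_of_nonpos (by linarith), abs_of_nonpos (by linarith)]; linarith
      · have h5 := h3 x hx
        have h6 := h4 u hu
        rw [abs_of_nonneg (by linarith), abs_of_nonneg (by linarith)]; linarith
    obtain ⟨K, hK, M, hM, hle⟩ := nikProd_moment_le hprod hσ hsep ha hab
    exact carleman_of_moment_le hσ hmem ha hab hs0 0 hK hM hle hdiv
  refine ⟨⟨a, b, ha, hs0, hsdiv⟩, fun τ aℓ bℓ hτ hτs _ heq => ?_⟩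
  have hτ0 : ∀ x ∈ τ.support, 0 ≤ a * x + b := fun x hx => hint x (hτs hx)
  obtain ⟨K, hK, M, hM, hle⟩ := inverse_moment_le hmem hτ ha hs0 hτ0 (aℓ := aℓ) (bℓ := bℓ) (by
    intro t ht
    refine heq _ fun x hx h => ?_
    have h1 := hint x hx
    rw [← Complex.ofReal_injective h] at h1
    have h2 : a * ((-t⁻¹ - b) / a) + b = -t⁻¹ := by field_simp; ring
    have h3 : 0 < t⁻¹ := by positivity
    linarith)
  exact ⟨a, b, ha, hτ0, carleman_of_moment_le hmem hτ ha hs0 hτ0 2 hK hM hle hsdiv⟩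

end
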